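/- Let (r,u) and (s,v) be extremal three-outcome qubit POVM Bloch data in ℝ³ (weights r₀,r₁,r₂ ≥ 0, unit vectors u₀,u₁,u₂ ∈ ℝ³ with Σr_j = 2 and Σ r_j u_j = 0, and similarly for (s,v)). Then there exist extremal three-outcome qubit POVM Bloch data (r',u') and (s',v') with all six unit vectors u'₀,u'₁,u'₂,v'₀,v'₁,v'₂ lying in the plane {x ∈ ℝ³ : x₃ = 0}, such that f(r',u',s',v') ≥ f(r,u,s,v). That is, the optimal value of f is achieved with both POVMs in a common plane of the Bloch sphere. -/

import Mathlib

/-!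
The maximum of `f` over all Bloch data is `4 + 4 * √2`, attained by two projective measurements
along orthogonal axes, which lie in a common plane. So it suffices to prove `f ≤ 4 + 4 * √2`.

Put `aᵢ = rᵢ uᵢ` and `bⱼ = sⱼ vⱼ`: two triples of vectors with sum zero and norms summing to `2`.
Relabel so that `a₃` and `b₃` are the shortest. Estimate each norm except `‖a₃ + b₃‖` by a tangent
bound `‖x‖ ≤ (g ‖x‖² + 1 / g) / 2`, with `g = 1 / √2` when `i, j ≤ 2` and `g = 1` when exactly one
index is `3` (equality holds at the optimum). Since `∑ aᵢ = ∑ bⱼ = 0`, the inner products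
occurring in these bounds add up to `-(2 - 1 / √2) ⟪a₃, b₃⟫`, and
`‖a₃ + b₃‖ - (2 - 1 / √2) ⟪a₃, b₃⟫ ≤ ‖a₃‖ + ‖b₃‖` because `a₃, b₃` are short
(`short_pair_bound`). What is left is a sum of a function of the norms `‖aᵢ‖` and the same function
of the norms `‖bⱼ‖`, and each is maximal at `(1, 1, 0)` (`norm_profile_bound`).
-/

/-- Bloch data of an extremal three-outcome qubit POVM: nonnegative weights summing
to `2` and unit vectors in `ℝ³` with vanishing weighted sum. -/
def IsExtremalPOVMBloch (r : Fin 3 → ℝ) (u : Fin 3 → EuclideanSpace ℝ (Fin 3)) : Prop :=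
  (∀ j, 0 ≤ r j) ∧ (∀ j, ‖u j‖ = 1) ∧ (∑ j, r j = 2) ∧ (∑ j, r j • u j = 0)

/-- The objective function `f(r,u,s,v) = Σᵢⱼ ‖rᵢuᵢ + sⱼvⱼ‖`. -/
noncomputable def blochF (r : Fin 3 → ℝ) (u : Fin 3 → EuclideanSpace ℝ (Fin 3))
    (s : Fin 3 → ℝ) (v : Fin 3 → EuclideanSpace ℝ (Fin 3)) : ℝ :=
  ∑ i : Fin 3, ∑ j : Fin 3, ‖r i • u i + s j • v j‖

/-- Bound for the pair of shortest vectors, of lengths `p`, `q`, inner product `X` and sum of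
length `n`. -/
lemma short_pair_bound {g p q n X : ℝ} (hg : 0 < g) (hp : 0 ≤ p) (hq : 0 ≤ q)
    (hgp : g * p ≤ 1) (hgq : g * q ≤ 1) (hn : n ≤ p + q) (hX : n ^ 2 = p ^ 2 + q ^ 2 + 2 * X) :
    n - g * X ≤ p + q := by
  -- With `x = g p`, `y = g q`, `T = g (p + q - n)` the claim is that this quadratic in `T` is
  -- nonnegative.
  have key : ∀ x y T : ℝ, 0 ≤ x → 0 ≤ y → x ≤ 1 → y ≤ 1 → 0 ≤ T →
      0 ≤ T * (1 - x - y) + T ^ 2 / 2 + x * y := by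
    intro x y T hx hy hx1 hy1 hT
    have hxy := mul_nonneg hx hy
    rcases le_total (x + y) 1 with h | h
    · have := mul_nonneg hT (by linarith : 0 ≤ 1 - x - y)
      positivity
    · nlinarith [sq_nonneg (T - (x + y - 1)), mul_nonneg hx (sub_nonneg.2 hx1),
        mul_nonneg hy (sub_nonneg.2 hy1)]
  have h := key (g * p) (g * q) (g * (p + q - n)) (by positivity) (by positivity) hgp hgq
    (mul_nonneg hg.le (by linarith))
  have hXe : X = (n ^ 2 - p ^ 2 - q ^ 2) / 2 := by linarith
  have h2 : 0 ≤ g * (p + q - (n - g * X)) := by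
    rw [hXe]; nlinarith [h]
  linarith [(mul_nonneg_iff_of_pos_left hg).1 h2]

/-- The single-triple part of the estimate is maximal at the norms `(1, 1, 0)`; here `k = √2`. -/
lemma norm_profile_bound {k p₁ p₂ p₃ : ℝ} (hk1 : 1.4 < k) (hk2 : k < 1.5)
    (h1 : p₁ ≤ 1) (h2 : p₂ ≤ 1) (h31 : p₃ ≤ p₁) (h32 : p₃ ≤ p₂) (hs : p₁ + p₂ + p₃ = 2) :
    (1 + k) / 2 * (p₁ ^ 2 + p₂ ^ 2) + p₃ ^ 2 + p₃ ≤ 1 + k := by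
  obtain ⟨α, rfl⟩ : ∃ α, p₁ = 1 - α := ⟨1 - p₁, by ring⟩
  obtain ⟨β, rfl⟩ : ∃ β, p₂ = 1 - β := ⟨1 - p₂, by ring⟩
  obtain rfl : p₃ = α + β := by linarith
  have ha : 0 ≤ α := by linarith
  have hb : 0 ≤ β := by linarith
  have hsq : α ^ 2 + β ^ 2 ≤ (α + β) / 2 := by nlinarith
  have hσ : (α + β) ^ 2 ≤ 2 / 3 * (α + β) := by nlinarith
  have h3 : (1 + k) / 2 * (α ^ 2 + β ^ 2) ≤ (1 + k) / 2 * ((α + β) / 2) := by gcongr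
  have h4 : (1 + k) / 2 * ((α + β) / 2) + 2 / 3 * (α + β) ≤ k * (α + β) := by
    nlinarith [mul_nonneg (by linarith : 0 ≤ k - 1.4) (add_nonneg ha hb)]
  nlinarith

lemma norm_le_one_of_triple {E : Type*} [NormedAddCommGroup E] {a b c : E} (h : a + b + c = 0) (hs : ‖a‖ + ‖b‖ + ‖c‖ = 2) :
    ‖a‖ ≤ 1 := by
  have : ‖a‖ = ‖b + c‖ := by
    rw [← norm_neg a]; congr 1
    rw [neg_eq_iff_add_eq_zero, ← add_assoc, h]
  linarith [norm_add_le b c]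

section
variable {E : Type*} [NormedAddCommGroup E] [InnerProductSpace ℝ E]

/-- The bound `4 + 4 * √2`, for triples listed with their shortest vector last. -/
lemma sum_norm_le_of_shortest_last {a₁ a₂ a₃ b₁ b₂ b₃ : E}
    (ha : a₁ + a₂ + a₃ = 0) (hb : b₁ + b₂ + b₃ = 0)
    (hsa : ‖a₁‖ + ‖a₂‖ + ‖a₃‖ = 2) (hsb : ‖b₁‖ + ‖b₂‖ + ‖b₃‖ = 2)
    (ha1 : ‖a₃‖ ≤ ‖a₁‖) (ha2 : ‖a₃‖ ≤ ‖a₂‖) (hb1 : ‖b₃‖ ≤ ‖b₁‖) (hb2 : ‖b₃‖ ≤ ‖b₂‖) :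
    ‖a₁ + b₁‖ + ‖a₁ + b₂‖ + ‖a₁ + b₃‖ + (‖a₂ + b₁‖ + ‖a₂ + b₂‖ + ‖a₂ + b₃‖)
      + (‖a₃ + b₁‖ + ‖a₃ + b₂‖ + ‖a₃ + b₃‖) ≤ 4 + 4 * √2 := by
  have hA1 : ‖a₁‖ ≤ 1 := norm_le_one_of_triple ha hsa
  have hA2 : ‖a₂‖ ≤ 1 := norm_le_one_of_triple (b := a₁) (c := a₃)
    (by rw [← ha]; abel) (by linarith)
  have hB1 : ‖b₁‖ ≤ 1 := norm_le_one_of_triple hb hsb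
  have hB2 : ‖b₂‖ ≤ 1 := norm_le_one_of_triple (b := b₁) (c := b₃)
    (by rw [← hb]; abel) (by linarith)
  have hk : √2 ^ 2 = (2 : ℝ) := Real.sq_sqrt (by norm_num)
  have hk0 : 0 ≤ √2 := Real.sqrt_nonneg 2
  set k := √2
  have hk1 : 1.4 < k := by nlinarith
  have hk2 : k < 1.5 := by nlinarith
  have ha3 : a₃ = -a₁ - a₂ := by
    rw [eq_sub_iff_add_eq, eq_neg_iff_add_eq_zero, ← ha]; abel
  have hb3 : b₃ = -b₁ - b₂ := by
    rw [eq_sub_iff_add_eq, eq_neg_iff_add_eq_zero, ← hb]; abel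
  have e := fun x y : E => norm_add_sq_real x y
  have x13 : inner ℝ a₁ b₃ = -inner ℝ a₁ b₁ - inner ℝ a₁ b₂ := by
    rw [hb3, inner_sub_right, inner_neg_right]
  have x23 : inner ℝ a₂ b₃ = -inner ℝ a₂ b₁ - inner ℝ a₂ b₂ := by
    rw [hb3, inner_sub_right, inner_neg_right]
  have x31 : inner ℝ a₃ b₁ = -inner ℝ a₁ b₁ - inner ℝ a₂ b₁ := by
    rw [ha3, inner_sub_left, inner_neg_left]
  have x32 : inner ℝ a₃ b₂ = -inner ℝ a₁ b₂ - inner ℝ a₂ b₂ := by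
    rw [ha3, inner_sub_left, inner_neg_left]
  have x33 : inner ℝ a₃ b₃ = -inner ℝ a₁ b₃ - inner ℝ a₂ b₃ := by
    rw [ha3, inner_sub_left, inner_neg_left]
  -- The factor `k / 2 = 1 / √2` is the tangent slope at `n = √2`.
  have tk : ∀ n : ℝ, n ≤ (k / 2 * n ^ 2 + k) / 2 := fun n => by
    nlinarith [mul_nonneg hk0 (sq_nonneg (n - k))]
  have t1 : ∀ n : ℝ, n ≤ (n ^ 2 + 1) / 2 := fun n => by nlinarith [sq_nonneg (n - 1)]
  have h11 := tk ‖a₁ + b₁‖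
  have h12 := tk ‖a₁ + b₂‖
  have h21 := tk ‖a₂ + b₁‖
  have h22 := tk ‖a₂ + b₂‖
  have h13 := t1 ‖a₁ + b₃‖
  have h23 := t1 ‖a₂ + b₃‖
  have h31 := t1 ‖a₃ + b₁‖
  have h32 := t1 ‖a₃ + b₂‖
  have h33 := short_pair_bound (g := 2 - k / 2) (by linarith) (norm_nonneg a₃) (norm_nonneg b₃)
    (by nlinarith [norm_nonneg a₃]) (by nlinarith [norm_nonneg b₃]) (norm_add_le a₃ b₃)
    (by rw [e]; ring : _ = _ + _ + 2 * inner ℝ a₃ b₃)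
  have hpa := norm_profile_bound hk1 hk2 hA1 hA2 ha1 ha2 hsa
  have hpb := norm_profile_bound hk1 hk2 hB1 hB2 hb1 hb2 hsb
  rw [e] at h11 h12 h21 h22 h13 h23 h31 h32
  rw [x33] at h33
  rw [x13] at h13 h33
  rw [x23] at h23 h33
  rw [x31] at h31
  rw [x32] at h32
  linarith

lemma sum_norm_le {a b : Fin 3 → E} (ha : a 0 + a 1 + a 2 = 0) (hb : b 0 + b 1 + b 2 = 0)
    (hsa : ‖a 0‖ + ‖a 1‖ + ‖a 2‖ = 2) (hsb : ‖b 0‖ + ‖b 1‖ + ‖b 2‖ = 2) :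
    ∑ i, ∑ j, ‖a i + b j‖ ≤ 4 + 4 * √2 := by
  have perm : ∀ c : Fin 3 → E, c 0 + c 1 + c 2 = 0 → ‖c 0‖ + ‖c 1‖ + ‖c 2‖ = 2 →
      ∃ σ : Equiv.Perm (Fin 3), c (σ 0) + c (σ 1) + c (σ 2) = 0 ∧
        ‖c (σ 0)‖ + ‖c (σ 1)‖ + ‖c (σ 2)‖ = 2 ∧
        ‖c (σ 2)‖ ≤ ‖c (σ 0)‖ ∧ ‖c (σ 2)‖ ≤ ‖c (σ 1)‖ := by
    intro c h hs
    obtain ⟨m, hm⟩ := Finite.exists_min (fun i => ‖c i‖)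
    refine ⟨Equiv.swap 2 m, ?_, ?_, ?_, ?_⟩
    · rw [← h]
      simpa [Fin.sum_univ_three] using Equiv.sum_comp (Equiv.swap 2 m) c
    · rw [← hs]
      simpa [Fin.sum_univ_three] using Equiv.sum_comp (Equiv.swap 2 m) (fun i => ‖c i‖)
    · rw [Equiv.swap_apply_left]; exact hm _
    · rw [Equiv.swap_apply_left]; exact hm _
  obtain ⟨σ, h1, h2, h3, h4⟩ := perm a ha hsa
  obtain ⟨τ, k1, k2, k3, k4⟩ := perm b hb hsb
  have := sum_norm_le_of_shortest_last h1 k1 h2 k2 h3 h4 k3 k4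
  rw [← Equiv.sum_comp σ]
  simp_rw [← Equiv.sum_comp τ (fun j => ‖a _ + b j‖)]
  simpa only [Fin.sum_univ_three] using this

end

lemma blochF_le {r : Fin 3 → ℝ} {u : Fin 3 → EuclideanSpace ℝ (Fin 3)}
    {s : Fin 3 → ℝ} {v : Fin 3 → EuclideanSpace ℝ (Fin 3)}
    (hru : IsExtremalPOVMBloch r u) (hsv : IsExtremalPOVMBloch s v) :
    blochF r u s v ≤ 4 + 4 * √2 := by
  obtain ⟨hr, hu, hr2, hr0⟩ := hru
  obtain ⟨hs, hv, hs2, hs0⟩ := hsv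
  rw [Fin.sum_univ_three] at hr2 hr0 hs2 hs0
  refine sum_norm_le (a := fun i => r i • u i) (b := fun j => s j • v j) hr0 hs0 ?_ ?_
  · simpa [norm_smul, hu, abs_of_nonneg (hr _)] using hr2
  · simpa [norm_smul, hv, abs_of_nonneg (hs _)] using hs2

/-- A projective measurement along a unit vector `e`; the third outcome has weight `0`, so its
direction is immaterial and is set to `e`. -/
lemma isExtremalPOVMBloch_projective {e : EuclideanSpace ℝ (Fin 3)} (he : ‖e‖ = 1) :
    IsExtremalPOVMBloch ![1, 1, 0] ![e, -e, e] := by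
  refine ⟨fun j => ?_, fun j => ?_, ?_, ?_⟩
  · fin_cases j <;> simp
  · fin_cases j <;> simp [he]
  · simp [Fin.sum_univ_three]; norm_num
  · simp [Fin.sum_univ_three]

lemma blochF_projective :
    blochF ![1, 1, 0] ![!₂[1, 0, 0], -!₂[1, 0, 0], !₂[1, 0, 0]]
      ![1, 1, 0] ![!₂[0, 1, 0], -!₂[0, 1, 0], !₂[0, 1, 0]] = 4 + 4 * √2 := by
  simp [blochF, Fin.sum_univ_three, EuclideanSpace.norm_eq]
  norm_num
  ring

theorem stmt7 (r : Fin 3 → ℝ) (u : Fin 3 → EuclideanSpace ℝ (Fin 3))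
    (s : Fin 3 → ℝ) (v : Fin 3 → EuclideanSpace ℝ (Fin 3))
    (hru : IsExtremalPOVMBloch r u) (hsv : IsExtremalPOVMBloch s v) :
    ∃ (r' : Fin 3 → ℝ) (u' : Fin 3 → EuclideanSpace ℝ (Fin 3))
      (s' : Fin 3 → ℝ) (v' : Fin 3 → EuclideanSpace ℝ (Fin 3)),
      IsExtremalPOVMBloch r' u' ∧ IsExtremalPOVMBloch s' v' ∧
      (∀ j, u' j 2 = 0) ∧ (∀ j, v' j 2 = 0) ∧
      blochF r u s v ≤ blochF r' u' s' v' := by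
  refine ⟨_, _, _, _, isExtremalPOVMBloch_projective (e := !₂[1, 0, 0]) ?_,
    isExtremalPOVMBloch_projective (e := !₂[0, 1, 0]) ?_, ?_, ?_,
    (blochF_le hru hsv).trans_eq blochF_projective.symm⟩
  · simp [EuclideanSpace.norm_eq, Fin.sum_univ_three]
  · simp [EuclideanSpace.norm_eq, Fin.sum_univ_three]
  · intro j; fin_cases j <;> simp
  · intro j; fin_cases j <;> simp
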